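/- arXiv:0910.3118 — 4 statements merged into one kernel-verified Lean document; each statement's English description precedes it below -/
import Mathlib

section
/- Let g : V → ℝ be a function whose support set S(g) := {i ∈ V : g(i) > 0} is nonempty. Define h(g) := min over nonempty subsets S ⊆ S(g) of |E(S, V∖S)|/vol(S), and let g₊ : V → ℝ be the positive part of g, i.e. g₊(i) = g(i) if g(i) > 0 and g₊(i) = 0 otherwise. Then 1 + √(1 − h(g)²) ≥ ( (1/2)·∑_{i,j∈V} w_{ij}(g₊(i) − g₊(j))² ) / ( ∑_{i∈V} d_i g₊(i)² ) ≥ 1 − √(1 − h(g)²). (Here 0 ≤ h(g) ≤ 1 holds automatically, and the denominator is positive since S(g) ≠ ∅.) -/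
/-!
Write `Q = ½ ∑ w_ij (f_i - f_j)²` and `D = ∑ d_i f_i²`. Every superlevel set `S` of `f²` at a
nonnegative level is contained in the support of `f`, so `h vol S ≤ |E(S, Sᶜ)|`; integrating over
the levels (the coarea formula) gives `h D ≤ ½ ∑ w_ij |f_i² - f_j²|`. Factoring
`f_i² - f_j² = (f_i - f_j) (f_i + f_j)`, Cauchy–Schwarz and the identity
`∑ w_ij (f_i + f_j)² = 4 D - 2 Q` turn this into `h² D² ≤ Q (2 D - Q)`, that is
`(Q / D - 1)² ≤ 1 - h²`.
-/

open Finset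

noncomputable section

namespace BJ

variable {V : Type*} [Fintype V] [DecidableEq V]

/-- The degree `d_i = ∑_j w_ij` of a vertex. -/
def deg (w : V → V → ℝ) (i : V) : ℝ := ∑ j, w i j

/-- The volume `vol(A) = ∑_{i ∈ A} d_i` of a vertex subset. -/
def vol (w : V → V → ℝ) (A : Finset V) : ℝ := ∑ i ∈ A, deg w i

/-- The total edge weight `|E(A,B)| = ∑_{i ∈ A, j ∈ B} w_ij` between two vertex subsets. -/
def eW (w : V → V → ℝ) (A B : Finset V) : ℝ := ∑ i ∈ A, ∑ j ∈ B, w i j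

/-- The normalized graph Laplacian `(Δu)(i) = u(i) - (1/d_i) ∑_j w_ij u(j)`. -/
def lap (w : V → V → ℝ) (u : V → ℝ) (i : V) : ℝ :=
  u i - (1 / deg w i) * ∑ j, w i j * u j

/-- `lam` is an eigenvalue of the normalized graph Laplacian. -/
def IsEigen (w : V → V → ℝ) (lam : ℝ) : Prop :=
  ∃ u : V → ℝ, u ≠ 0 ∧ ∀ i, lap w u i = lam * u i

/-- The weighted graph is connected: any two vertices are joined by a chain of
positive-weight edges. -/
def Conn (w : V → V → ℝ) : Prop :=
  ∀ i j : V, Relation.ReflTransGen (fun a b => 0 < w a b) i j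

/-- The weighted graph is bipartite: the vertex set splits into two nonempty classes with
no edges inside a class. -/
def Bipartite (w : V → V → ℝ) : Prop :=
  ∃ A : Finset V, A.Nonempty ∧ Aᶜ.Nonempty ∧
    (∀ i ∈ A, ∀ j ∈ A, w i j = 0) ∧ (∀ i ∈ Aᶜ, ∀ j ∈ Aᶜ, w i j = 0)

/-- The Cheeger constant
`h = min { |E(U,Uᶜ)| / vol(U) : ∅ ≠ U ⊊ V, vol(U) ≤ vol(V)/2 }`. -/
def cheeger (w : V → V → ℝ) : ℝ :=
  sInf { r : ℝ | ∃ U : Finset V, U.Nonempty ∧ U ≠ Finset.univ ∧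
    vol w U ≤ vol w Finset.univ / 2 ∧ r = eW w U Uᶜ / vol w U }

/-- The dual Cheeger constant
`h̄ = max { 2|E(V₁,V₂)| / (vol(V₁)+vol(V₂)) }` over pairs of disjoint nonempty vertex sets
`V₁, V₂` (the third class `V₃` of the partition being the complement of `V₁ ∪ V₂`). -/
def dualCheeger (w : V → V → ℝ) : ℝ :=
  sSup { r : ℝ | ∃ V1 V2 : Finset V, V1.Nonempty ∧ V2.Nonempty ∧ Disjoint V1 V2 ∧
    r = 2 * eW w V1 V2 / (vol w V1 + vol w V2) }

/-- The weights of the neighborhood graph `Γ[l]`: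
`w_ij[l] = ∑_{k₁,…,k_{l-1}} w_{i k₁} w_{k₁ k₂} ⋯ w_{k_{l-1} j} / (d_{k₁} ⋯ d_{k_{l-1}})`,
defined recursively (as a matrix, `wl w l = D ⬝ P^l`; in particular `wl w 1 = w`). -/
def wl (w : V → V → ℝ) : ℕ → V → V → ℝ
  | 0 => fun i j => if i = j then deg w i else 0
  | n + 1 => fun i j => ∑ k, wl w n i k * w k j / deg w k

open MeasureTheory

/-- The Dirichlet energy `½ ∑_{i,j} w_ij (f(i) - f(j))²`, the numerator of the Rayleigh quotient.
The factor `½` compensates for each edge being counted in both directions. -/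
def dirichletEnergy (w : V → V → ℝ) (f : V → ℝ) : ℝ :=
  (1 / 2) * ∑ i, ∑ j, w i j * (f i - f j) ^ 2

/-- The squared norm `∑_i d_i f(i)²` of `f` in the `ℓ²` space weighted by the degrees, the
denominator of the Rayleigh quotient. -/
def degNormSq (w : V → V → ℝ) (f : V → ℝ) : ℝ := ∑ i, deg w i * f i ^ 2

/-- The Rayleigh quotient of the normalized Laplacian at `f`; it takes the junk value `0` when
`degNormSq w f = 0`. -/
def rayleighQuotient (w : V → V → ℝ) (f : V → ℝ) : ℝ := dirichletEnergy w f / degNormSq w f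

/-- The Cheeger constant of `A` with Dirichlet boundary condition,
`min {|E(S,Sᶜ)| / vol(S) : ∅ ≠ S ⊆ A}`. For `A = S(g)` it is the constant `h(g)`. It takes the
junk value `0` when `A` is empty. -/
def dirichletCheeger (w : V → V → ℝ) (A : Set V) : ℝ :=
  sInf {r : ℝ | ∃ S : Finset V, S.Nonempty ∧ ↑S ⊆ A ∧ r = eW w S Sᶜ / vol w S}

/-- The strict superlevel set `{i : t < f(i)}`, over which the coarea formula integrates. -/
def superlevel (f : V → ℝ) (t : ℝ) : Finset V := {i | t < f i}

omit [DecidableEq V] in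
lemma deg_nonneg {w : V → V → ℝ} (hnn : ∀ i j, 0 ≤ w i j) (i : V) : 0 ≤ deg w i :=
  sum_nonneg fun j _ => hnn i j

section DirichletCheeger

variable {w : V → V → ℝ} {A : Set V}

lemma dirichletCheeger_nonneg (hnn : ∀ i j, 0 ≤ w i j) : 0 ≤ dirichletCheeger w A := by
  refine Real.sInf_nonneg ?_
  rintro r ⟨S, -, -, rfl⟩
  exact div_nonneg (sum_nonneg fun i _ => sum_nonneg fun j _ => hnn i j)
    (sum_nonneg fun i _ => deg_nonneg hnn i)

lemma dirichletCheeger_mul_vol_le_eW (hdeg : ∀ i ∈ A, 0 < deg w i) {S : Finset V}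
    (hSA : ↑S ⊆ A) : dirichletCheeger w A * vol w S ≤ eW w S Sᶜ := by
  obtain rfl | hS := S.eq_empty_or_nonempty
  · simp [vol, eW]
  have hvol : 0 < vol w S := sum_pos (fun i hi => hdeg i (hSA hi)) hS
  have hbdd : BddBelow {r : ℝ | ∃ S : Finset V, S.Nonempty ∧ ↑S ⊆ A ∧
      r = eW w S Sᶜ / vol w S} := by
    refine (Set.finite_range fun S : Finset V => eW w S Sᶜ / vol w S).bddBelow.mono ?_
    rintro r ⟨S, -, -, rfl⟩
    exact ⟨S, rfl⟩
  exact (le_div_iff₀ hvol).1 (csInf_le hbdd ⟨S, hS, hSA, rfl⟩)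

end DirichletCheeger

section Coarea

lemma integrableOn_indicator_Ico (a b : ℝ) (s : Set ℝ) :
    IntegrableOn ((Set.Ico a b).indicator (1 : ℝ → ℝ)) s :=
  ((integrable_indicator_iff measurableSet_Ico).2
    (integrableOn_const measure_Ico_lt_top.ne)).integrableOn

lemma setIntegral_Ici_zero_indicator_Ico {a : ℝ} (ha : 0 ≤ a) (b : ℝ) :
    ∫ t in Set.Ici 0, (Set.Ico a b).indicator (1 : ℝ → ℝ) t = max (b - a) 0 := by
  have hsub : Set.Ico a b ⊆ Set.Ici 0 := fun t ht => ha.trans ht.1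
  rw [integral_indicator_one measurableSet_Ico, measureReal_restrict_apply measurableSet_Ico,
    Set.inter_eq_left.2 hsub, Real.volume_real_Ico]

omit [DecidableEq V] in
lemma vol_superlevel (w : V → V → ℝ) (f : V → ℝ) {t : ℝ} (ht : 0 ≤ t) :
    vol w (superlevel f t) = ∑ i, deg w i * (Set.Ico 0 (f i)).indicator (1 : ℝ → ℝ) t := by
  simp [vol, superlevel, sum_filter, Set.indicator_apply, ht]

lemma eW_superlevel (w : V → V → ℝ) (f : V → ℝ) (t : ℝ) :
    eW w (superlevel f t) (superlevel f t)ᶜ =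
      ∑ i, ∑ j, w i j * (Set.Ico (f j) (f i)).indicator (1 : ℝ → ℝ) t := by
  simp only [eW, superlevel, compl_filter, not_lt, sum_filter]
  refine sum_congr rfl fun i _ => ?_
  by_cases hi : t < f i <;> simp [Set.indicator_apply, hi]

omit [DecidableEq V] in
lemma integrableOn_vol_superlevel (w : V → V → ℝ) (f : V → ℝ) :
    IntegrableOn (fun t => vol w (superlevel f t)) (Set.Ici 0) := by
  refine IntegrableOn.congr_fun ?_ (fun t ht => (vol_superlevel w f ht).symm) measurableSet_Ici
  exact integrable_finsetSum _ fun i _ => (integrableOn_indicator_Ico _ _ _).const_mul _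

lemma integrableOn_eW_superlevel (w : V → V → ℝ) (f : V → ℝ) :
    IntegrableOn (fun t => eW w (superlevel f t) (superlevel f t)ᶜ) (Set.Ici 0) := by
  simp only [eW_superlevel]
  exact integrable_finsetSum _ fun i _ => integrable_finsetSum _ fun j _ =>
    (integrableOn_indicator_Ico _ _ _).const_mul _

omit [DecidableEq V] in
lemma setIntegral_vol_superlevel (w : V → V → ℝ) {f : V → ℝ} (hf : ∀ i, 0 ≤ f i) :
    ∫ t in Set.Ici 0, vol w (superlevel f t) = ∑ i, deg w i * f i := by
  rw [setIntegral_congr_fun measurableSet_Ici fun t ht => vol_superlevel w f ht,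
    integral_finsetSum _ fun i _ => (integrableOn_indicator_Ico _ _ _).const_mul _]
  refine sum_congr rfl fun i _ => ?_
  rw [integral_const_mul, setIntegral_Ici_zero_indicator_Ico le_rfl, sub_zero,
    max_eq_left (hf i)]

lemma setIntegral_eW_superlevel (w : V → V → ℝ) {f : V → ℝ} (hf : ∀ i, 0 ≤ f i) :
    ∫ t in Set.Ici 0, eW w (superlevel f t) (superlevel f t)ᶜ =
      ∑ i, ∑ j, w i j * max (f i - f j) 0 := by
  have hint (i j : V) : IntegrableOn
      (fun t => w i j * (Set.Ico (f j) (f i)).indicator (1 : ℝ → ℝ) t) (Set.Ici 0) :=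
    (integrableOn_indicator_Ico _ _ _).const_mul _
  simp only [eW_superlevel]
  rw [integral_finsetSum _ fun i _ => integrable_finsetSum _ fun j _ => hint i j]
  refine sum_congr rfl fun i _ => ?_
  rw [integral_finsetSum _ fun j _ => hint i j]
  refine sum_congr rfl fun j _ => ?_
  rw [integral_const_mul, setIntegral_Ici_zero_indicator_Ico (hf j)]

lemma mul_sum_deg_mul_le_of_mul_vol_superlevel_le {w : V → V → ℝ} {f : V → ℝ} {h : ℝ}
    (hf : ∀ i, 0 ≤ f i)
    (hiso : ∀ t, 0 ≤ t →
      h * vol w (superlevel f t) ≤ eW w (superlevel f t) (superlevel f t)ᶜ) :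
    h * ∑ i, deg w i * f i ≤ ∑ i, ∑ j, w i j * max (f i - f j) 0 := by
  rw [← setIntegral_vol_superlevel w hf, ← setIntegral_eW_superlevel w hf, ← integral_const_mul]
  exact setIntegral_mono_on ((integrableOn_vol_superlevel w f).const_mul h)
    (integrableOn_eW_superlevel w f) measurableSet_Ici hiso

end Coarea

section QuadraticForms

omit [DecidableEq V]

variable {w : V → V → ℝ}

lemma sum_mul_max_sub_zero_eq_half (hsym : ∀ i j, w i j = w j i) (f : V → ℝ) :
    ∑ i, ∑ j, w i j * max (f i - f j) 0 = (1 / 2) * ∑ i, ∑ j, w i j * |f i - f j| := by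
  have hswap : ∑ i, ∑ j, w i j * max (f i - f j) 0 = ∑ i, ∑ j, w i j * max (f j - f i) 0 := by
    rw [sum_comm]
    simp only [fun i j => hsym j i]
  have hsplit : ∑ i, ∑ j, w i j * |f i - f j| =
      ∑ i, ∑ j, w i j * max (f i - f j) 0 + ∑ i, ∑ j, w i j * max (f j - f i) 0 := by
    simp only [← sum_add_distrib, ← mul_add]
    refine sum_congr rfl fun i _ => sum_congr rfl fun j _ => ?_
    rw [← max_zero_add_max_neg_zero_eq_abs_self, neg_sub, max_comm, max_comm 0]
  linarith

lemma sum_mul_add_sq_eq (hsym : ∀ i j, w i j = w j i) (f : V → ℝ) :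
    ∑ i, ∑ j, w i j * (f i + f j) ^ 2 = 4 * degNormSq w f - 2 * dirichletEnergy w f := by
  have hfst : ∑ i, ∑ j, w i j * f i ^ 2 = degNormSq w f := by
    simp only [degNormSq, deg, sum_mul]
  have hsnd : ∑ i, ∑ j, w i j * f j ^ 2 = degNormSq w f := by
    rw [sum_comm, ← hfst]
    simp only [fun i j => hsym j i]
  have hparallelogram : ∑ i, ∑ j, w i j * (f i + f j) ^ 2 +
      ∑ i, ∑ j, w i j * (f i - f j) ^ 2 =
        2 * ∑ i, ∑ j, w i j * f i ^ 2 + 2 * ∑ i, ∑ j, w i j * f j ^ 2 := by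
    simp only [mul_sum, ← sum_add_distrib]
    exact sum_congr rfl fun i _ => sum_congr rfl fun j _ => by ring
  rw [hfst, hsnd] at hparallelogram
  unfold dirichletEnergy
  linarith

lemma sq_sum_mul_abs_sq_sub_sq_le (hnn : ∀ i j, 0 ≤ w i j) (f : V → ℝ) :
    (∑ i, ∑ j, w i j * |f i ^ 2 - f j ^ 2|) ^ 2 ≤
      (∑ i, ∑ j, w i j * (f i - f j) ^ 2) * ∑ i, ∑ j, w i j * (f i + f j) ^ 2 := by
  simp only [← Fintype.sum_prod_type']
  refine sum_sq_le_sum_mul_sum_of_sq_le_mul _ (fun p _ => mul_nonneg (hnn _ _) (sq_nonneg _))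
    (fun p _ => mul_nonneg (hnn _ _) (sq_nonneg _)) fun p _ => ?_
  rw [mul_pow, sq_abs]
  exact le_of_eq (by ring)

lemma degNormSq_pos (hnn : ∀ i j, 0 ≤ w i j) {f : V → ℝ}
    (hdeg : ∀ i ∈ Function.support f, 0 < deg w i) (hf : f ≠ 0) : 0 < degNormSq w f := by
  obtain ⟨i, hi⟩ := Function.ne_iff.1 hf
  exact sum_pos' (fun i _ => mul_nonneg (deg_nonneg hnn i) (sq_nonneg _))
    ⟨i, mem_univ i, mul_pos (hdeg i hi) (sq_pos_of_ne_zero hi)⟩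

end QuadraticForms

section Rayleigh

variable {w : V → V → ℝ}

lemma dirichletCheeger_support_mul_degNormSq_le (hsym : ∀ i j, w i j = w j i) {f : V → ℝ}
    (hdeg : ∀ i ∈ Function.support f, 0 < deg w i) :
    dirichletCheeger w (Function.support f) * degNormSq w f ≤
      (1 / 2) * ∑ i, ∑ j, w i j * |f i ^ 2 - f j ^ 2| := by
  rw [← sum_mul_max_sub_zero_eq_half hsym fun i => f i ^ 2]
  refine mul_sum_deg_mul_le_of_mul_vol_superlevel_le (fun i => sq_nonneg (f i)) fun t ht =>
    dirichletCheeger_mul_vol_le_eW hdeg fun i hi => ?_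
  have hlt : t < f i ^ 2 := by simpa [superlevel] using hi
  exact fun hzero => absurd hlt (by simpa [hzero] using ht)

lemma sq_dirichletCheeger_support_mul_degNormSq_le (hsym : ∀ i j, w i j = w j i)
    (hnn : ∀ i j, 0 ≤ w i j) {f : V → ℝ} (hdeg : ∀ i ∈ Function.support f, 0 < deg w i) :
    (dirichletCheeger w (Function.support f) * degNormSq w f) ^ 2 ≤
      dirichletEnergy w f * (2 * degNormSq w f - dirichletEnergy w f) := by
  have hD : 0 ≤ degNormSq w f :=
    sum_nonneg fun i _ => mul_nonneg (deg_nonneg hnn i) (sq_nonneg _)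
  calc (dirichletCheeger w (Function.support f) * degNormSq w f) ^ 2
      ≤ ((1 / 2) * ∑ i, ∑ j, w i j * |f i ^ 2 - f j ^ 2|) ^ 2 :=
        pow_le_pow_left₀ (mul_nonneg (dirichletCheeger_nonneg hnn) hD)
          (dirichletCheeger_support_mul_degNormSq_le hsym hdeg) 2
    _ = (1 / 4) * (∑ i, ∑ j, w i j * |f i ^ 2 - f j ^ 2|) ^ 2 := by ring
    _ ≤ (1 / 4) * ((∑ i, ∑ j, w i j * (f i - f j) ^ 2) *
          ∑ i, ∑ j, w i j * (f i + f j) ^ 2) := by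
        gcongr
        exact sq_sum_mul_abs_sq_sub_sq_le hnn f
    _ = dirichletEnergy w f * (2 * degNormSq w f - dirichletEnergy w f) := by
        rw [sum_mul_add_sq_eq hsym]
        unfold dirichletEnergy
        ring

lemma sq_rayleighQuotient_sub_one_le (hsym : ∀ i j, w i j = w j i) (hnn : ∀ i j, 0 ≤ w i j)
    {f : V → ℝ} (hdeg : ∀ i ∈ Function.support f, 0 < deg w i) (hf : f ≠ 0) :
    (rayleighQuotient w f - 1) ^ 2 ≤ 1 - dirichletCheeger w (Function.support f) ^ 2 := by
  have hD : 0 < degNormSq w f := degNormSq_pos hnn hdeg hf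
  have hmain := sq_dirichletCheeger_support_mul_degNormSq_le hsym hnn hdeg
  rw [rayleighQuotient, div_sub_one hD.ne', div_pow, div_le_iff₀ (by positivity)]
  linarith

end Rayleigh

theorem rayleigh_of_positive_part_bounds_general
    {w : V → V → ℝ} (hsym : ∀ i j, w i j = w j i) (hnn : ∀ i j, 0 ≤ w i j)
    {f : V → ℝ} (hdeg : ∀ i ∈ Function.support f, 0 < deg w i) (hf : f ≠ 0) :
    1 - √(1 - dirichletCheeger w (Function.support f) ^ 2) ≤ rayleighQuotient w f ∧
      rayleighQuotient w f ≤ 1 + √(1 - dirichletCheeger w (Function.support f) ^ 2) := by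
  have habs := abs_le.1 (Real.abs_le_sqrt (sq_rayleighQuotient_sub_one_le hsym hnn hdeg hf))
  constructor <;> linarith [habs.1, habs.2]

lemma support_max_zero {ι α : Type*} [LinearOrder α] [Zero α] (g : ι → α) :
    Function.support (fun i => max (g i) 0) = {i | 0 < g i} := by
  ext i
  simp

/-- Lemma 1: the key Cheeger-type lemma.
For `g` with nonempty support `S(g) = {i : g(i) > 0}`, with
`h(g) = min_{∅ ≠ S ⊆ S(g)} |E(S,Sᶜ)|/vol(S)` and `g₊` the positive part of `g`,
`1 + √(1 - h(g)²) ≥ (½ ∑_{i,j} w_ij (g₊(i)-g₊(j))²) / (∑_i d_i g₊(i)²) ≥ 1 - √(1 - h(g)²)`. -/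
theorem rayleigh_of_positive_part_bounds
    (w : V → V → ℝ)
    (hsym : ∀ i j, w i j = w j i) (hnn : ∀ i j, 0 ≤ w i j)
    (hdeg : ∀ i, 0 < deg w i) (hconn : Conn w) (hN : 2 ≤ Fintype.card V)
    (g : V → ℝ) (hSg : ∃ i, 0 < g i)
    (hg : ℝ)
    (hhg : hg = sInf { r : ℝ | ∃ S : Finset V, S.Nonempty ∧ (∀ i ∈ S, 0 < g i) ∧
        r = eW w S Sᶜ / vol w S })
    (gp : V → ℝ) (hgp : ∀ i, gp i = max (g i) 0) :
    1 - Real.sqrt (1 - hg ^ 2) ≤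
        ((1 / 2) * ∑ i, ∑ j, w i j * (gp i - gp j) ^ 2) / (∑ i, deg w i * gp i ^ 2) ∧
      ((1 / 2) * ∑ i, ∑ j, w i j * (gp i - gp j) ^ 2) / (∑ i, deg w i * gp i ^ 2) ≤
        1 + Real.sqrt (1 - hg ^ 2) := by
  obtain rfl : gp = fun i => max (g i) 0 := funext hgp
  have hf : (fun i => max (g i) 0) ≠ 0 := by
    rwa [← Function.support_nonempty_iff, support_max_zero]
  have hbounds := rayleigh_of_positive_part_bounds_general hsym hnn (fun i _ => hdeg i) hf
  rw [support_max_zero] at hbounds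
  exact hhg ▸ hbounds

end BJ
end
end

section
/- The dual Cheeger constant satisfies h̄ ≤ 1, and h̄ = 1 if and only if Γ is bipartite. -/
open Finset

noncomputable section

namespace BJ

variable {V : Type*} [Fintype V] [DecidableEq V]

/-!
Splitting each volume along `B` and along `A` gives
`vol A + vol B = 2 |E(A, B)| + |E(A, Bᶜ)| + |E(B, Aᶜ)|`. Hence every quotient in the definition of
`h̄` is at most `1`, with equality iff every edge that meets `A ∪ B` joins `A` to `B`. Then `A ∪ B`
is closed under adjacency, so in a connected graph it is all of `V` and `B = Aᶜ`.
-/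

section EdgeWeight

variable {w : V → V → ℝ}

omit [Fintype V] [DecidableEq V]

lemma eW_nonneg (hnn : ∀ i j, 0 ≤ w i j) (A B : Finset V) : 0 ≤ eW w A B :=
  sum_nonneg fun i _ => sum_nonneg fun j _ => hnn i j

lemma eW_eq_zero_iff (hnn : ∀ i j, 0 ≤ w i j) {A B : Finset V} :
    eW w A B = 0 ↔ ∀ i ∈ A, ∀ j ∈ B, w i j = 0 := by
  rw [eW, sum_eq_zero_iff_of_nonneg fun i _ => sum_nonneg fun j _ => hnn i j]
  exact forall₂_congr fun i _ => sum_eq_zero_iff_of_nonneg fun j _ => hnn i j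

lemma eW_comm (hsym : ∀ i j, w i j = w j i) (A B : Finset V) : eW w A B = eW w B A :=
  sum_comm.trans <| sum_congr rfl fun j _ => sum_congr rfl fun i _ => hsym i j

end EdgeWeight

section Volume

variable {w : V → V → ℝ}

lemma eW_add_eW_compl (w : V → V → ℝ) (A B : Finset V) : eW w A B + eW w A Bᶜ = vol w A :=
  sum_add_distrib.symm.trans <| sum_congr rfl fun i _ => sum_add_sum_compl B (w i)

lemma vol_add_vol (hsym : ∀ i j, w i j = w j i) (A B : Finset V) :
    vol w A + vol w B = 2 * eW w A B + (eW w A Bᶜ + eW w B Aᶜ) := by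
  rw [← eW_add_eW_compl w A B, ← eW_add_eW_compl w B A, eW_comm hsym B A]
  ring

omit [DecidableEq V]

lemma vol_pos (hdeg : ∀ i, 0 < deg w i) {A : Finset V} (hA : A.Nonempty) : 0 < vol w A :=
  sum_pos (fun i _ => hdeg i) hA

lemma two_mul_eW_le_vol_add_vol (hsym : ∀ i j, w i j = w j i) (hnn : ∀ i j, 0 ≤ w i j)
    (A B : Finset V) : 2 * eW w A B ≤ vol w A + vol w B := by
  classical
  rw [vol_add_vol hsym]
  exact le_add_of_nonneg_right (add_nonneg (eW_nonneg hnn _ _) (eW_nonneg hnn _ _))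

lemma two_mul_eW_eq_vol_add_vol_iff (hsym : ∀ i j, w i j = w j i) (hnn : ∀ i j, 0 ≤ w i j)
    {A B : Finset V} :
    2 * eW w A B = vol w A + vol w B ↔
      (∀ i ∈ A, ∀ j ∉ B, w i j = 0) ∧ (∀ i ∈ B, ∀ j ∉ A, w i j = 0) := by
  classical
  rw [vol_add_vol hsym, left_eq_add,
    add_eq_zero_iff_of_nonneg (eW_nonneg hnn _ _) (eW_nonneg hnn _ _),
    eW_eq_zero_iff hnn, eW_eq_zero_iff hnn]
  simp only [mem_compl]

end Volume

/-- `A` and `B` are the two classes of a bipartite union of connected components: every edge with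
an endpoint in `A ∪ B` joins `A` to `B`. For symmetric weights the two vanishing conditions also
exclude edges entering `A ∪ B` from outside. -/
structure IsBipartiteUnionOfComponents (w : V → V → ℝ) (A B : Finset V) : Prop where
  left_nonempty : A.Nonempty
  right_nonempty : B.Nonempty
  disjoint : Disjoint A B
  eq_zero_of_mem_left : ∀ i ∈ A, ∀ j ∉ B, w i j = 0
  eq_zero_of_mem_right : ∀ i ∈ B, ∀ j ∉ A, w i j = 0

section DualCheeger

variable {w : V → V → ℝ}

omit [DecidableEq V]

/-- The quotient `2|E(A,B)| / (vol(A) + vol(B))` that the dual Cheeger constant maximizes. -/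
def dualCheegerRatio (w : V → V → ℝ) (A B : Finset V) : ℝ :=
  2 * eW w A B / (vol w A + vol w B)

lemma dualCheegerRatio_le_one (hsym : ∀ i j, w i j = w j i) (hnn : ∀ i j, 0 ≤ w i j)
    (A B : Finset V) : dualCheegerRatio w A B ≤ 1 := by
  have hle := two_mul_eW_le_vol_add_vol hsym hnn A B
  exact div_le_one_of_le₀ hle ((mul_nonneg zero_le_two (eW_nonneg hnn A B)).trans hle)

lemma dualCheegerRatio_eq_one_iff (hsym : ∀ i j, w i j = w j i) (hnn : ∀ i j, 0 ≤ w i j)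
    {A B : Finset V} (hvol : vol w A + vol w B ≠ 0) :
    dualCheegerRatio w A B = 1 ↔
      (∀ i ∈ A, ∀ j ∉ B, w i j = 0) ∧ (∀ i ∈ B, ∀ j ∉ A, w i j = 0) := by
  rw [dualCheegerRatio, div_eq_one_iff_eq hvol, two_mul_eW_eq_vol_add_vol_iff hsym hnn]

lemma isGreatest_dualCheeger [Nontrivial V] (w : V → V → ℝ) :
    IsGreatest {r | ∃ A B : Finset V, A.Nonempty ∧ B.Nonempty ∧ Disjoint A B ∧
      r = dualCheegerRatio w A B} (dualCheeger w) := by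
  set ratios := {r | ∃ A B : Finset V, A.Nonempty ∧ B.Nonempty ∧ Disjoint A B ∧
    r = dualCheegerRatio w A B}
  have ratios_finite : ratios.Finite := by
    refine (Set.finite_range (Function.uncurry (dualCheegerRatio w))).subset ?_
    rintro _ ⟨A, B, -, -, -, rfl⟩
    exact ⟨(A, B), rfl⟩
  have ratios_nonempty : ratios.Nonempty := by
    obtain ⟨a, b, hab⟩ := exists_pair_ne V
    exact ⟨_, {a}, {b}, singleton_nonempty a, singleton_nonempty b,
      disjoint_singleton.2 hab, rfl⟩
  exact ⟨ratios_nonempty.csSup_mem ratios_finite, fun _ => le_csSup ratios_finite.bddAbove⟩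

lemma dualCheeger_le_one (hsym : ∀ i j, w i j = w j i) (hnn : ∀ i j, 0 ≤ w i j) :
    dualCheeger w ≤ 1 := by
  refine Real.sSup_le ?_ zero_le_one
  rintro _ ⟨A, B, -, -, -, rfl⟩
  exact dualCheegerRatio_le_one hsym hnn A B

lemma dualCheeger_eq_one_iff [Nontrivial V] (hsym : ∀ i j, w i j = w j i)
    (hnn : ∀ i j, 0 ≤ w i j) (hdeg : ∀ i, 0 < deg w i) :
    dualCheeger w = 1 ↔ ∃ A B, IsBipartiteUnionOfComponents w A B := by
  have ratio_eq_one_iff {A B : Finset V} (hA : A.Nonempty) (hB : B.Nonempty) :=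
    dualCheegerRatio_eq_one_iff hsym hnn (add_pos (vol_pos hdeg hA) (vol_pos hdeg hB)).ne'
  obtain ⟨⟨A, B, hA, hB, hAB, dualCheeger_eq⟩, ratio_le⟩ := isGreatest_dualCheeger w
  constructor
  · intro h
    obtain ⟨hleft, hright⟩ := (ratio_eq_one_iff hA hB).1 (dualCheeger_eq.symm.trans h)
    exact ⟨A, B, hA, hB, hAB, hleft, hright⟩
  · rintro ⟨A, B, hA, hB, hAB, hleft, hright⟩
    exact (dualCheeger_le_one hsym hnn).antisymm <|
      ratio_le ⟨A, B, hA, hB, hAB, ((ratio_eq_one_iff hA hB).2 ⟨hleft, hright⟩).symm⟩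

end DualCheeger

section Connected

variable {w : V → V → ℝ}

omit [DecidableEq V] in
lemma Conn.eq_univ_of_closed (hconn : Conn w) {U : Finset V} (hU : U.Nonempty)
    (hclosed : ∀ i ∈ U, ∀ j, 0 < w i j → j ∈ U) : U = univ := by
  obtain ⟨i, hi⟩ := hU
  refine eq_univ_of_forall fun j => ?_
  induction hconn i j with
  | refl => exact hi
  | tail _ hedge ih => exact hclosed _ ih _ hedge

lemma IsBipartiteUnionOfComponents.compl_eq {A B : Finset V}
    (h : IsBipartiteUnionOfComponents w A B) (hconn : Conn w) : Aᶜ = B := by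
  have union_closed : ∀ i ∈ A ∪ B, ∀ j, 0 < w i j → j ∈ A ∪ B := by
    intro i hi j hij
    rw [mem_union] at hi ⊢
    rcases hi with hiA | hiB
    · exact Or.inr (by_contra fun hjB => hij.ne' (h.eq_zero_of_mem_left i hiA j hjB))
    · exact Or.inl (by_contra fun hjA => hij.ne' (h.eq_zero_of_mem_right i hiB j hjA))
  have union_eq_univ : A ∪ B = univ := hconn.eq_univ_of_closed h.left_nonempty.inl union_closed
  exact IsCompl.compl_eq ⟨h.disjoint, codisjoint_iff.2 union_eq_univ⟩

lemma Conn.bipartite_iff (hconn : Conn w) :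
    Bipartite w ↔ ∃ A B, IsBipartiteUnionOfComponents w A B := by
  constructor
  · rintro ⟨A, hA, hAc, hleft, hright⟩
    refine ⟨A, Aᶜ, hA, hAc, disjoint_compl_right, fun i hi j hj => ?_, fun i hi j hj => ?_⟩
    · exact hleft i hi j (notMem_compl.1 hj)
    · exact hright i hi j (mem_compl.2 hj)
  · rintro ⟨A, B, h⟩
    obtain rfl := h.compl_eq hconn
    refine ⟨A, h.left_nonempty, h.right_nonempty, fun i hi j hj => ?_, fun i hi j hj => ?_⟩
    · exact h.eq_zero_of_mem_left i hi j (notMem_compl.2 hj)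
    · exact h.eq_zero_of_mem_right i hi j (mem_compl.1 hj)

end Connected

/-- Theorem: dual Cheeger constant characterizes bipartiteness.
The dual Cheeger constant satisfies `h̄ ≤ 1`, and `h̄ = 1` iff `Γ` is bipartite. -/
theorem dualCheeger_le_one_and_eq_one_iff_bipartite
    (w : V → V → ℝ)
    (hsym : ∀ i j, w i j = w j i) (hnn : ∀ i j, 0 ≤ w i j)
    (hdeg : ∀ i, 0 < deg w i) (hconn : Conn w) (hN : 2 ≤ Fintype.card V) :
    dualCheeger w ≤ 1 ∧ (dualCheeger w = 1 ↔ Bipartite w) := by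
  have : Nontrivial V := Fintype.one_lt_card_iff_nontrivial.1 hN
  exact ⟨dualCheeger_le_one hsym hnn,
    (dualCheeger_eq_one_iff hsym hnn hdeg).trans hconn.bipartite_iff.symm⟩

end BJ
end
end

section
/- Let u : V → ℝ be an eigenfunction of Δ for the largest eigenvalue λ_{N−1}, normalized so that max_{i∈V} |u(i)| = 1. Then λ_{N−1} ≤ 2 − w_min·(1 − min_{i∈V}|u(i)|)² / (D·vol(V)), where w_min := min{ w_{ij} : i,j ∈ V, w_{ij} > 0 } is the smallest positive edge weight and D is the diameter of Γ (the maximal graph distance between two vertices, edges being pairs with positive weight). In particular, if there is a vertex i with u(i) = 0, then λ_{N−1} ≤ 2 − w_min/(D·vol(V)). -/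
open Finset

noncomputable section

namespace BJ

variable {V : Type*} [Fintype V] [DecidableEq V]

/-!
Multiplying the eigenvalue equation by `d_i u(i)` and summing over `i` gives
`∑_{i,j} w_ij (u(i) + u(j))² = 2 (2 - λ) ∑_i d_i u(i)²`. The right-hand side is at most
`2 (2 - λ) vol(V)` when `|u| ≤ 1`. For the left-hand side, join a vertex where `|u|` is maximal to
one where it is minimal by a shortest path. Since `||u(i)| - |u(j)|| ≤ |u(i) + u(j)|`, the
Cauchy–Schwarz inequality along that path bounds the left-hand side from below by
`2 w_min (1 - min |u|)² / D`; the factor `2` appears because every edge of the path is counted in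
both directions.
-/

section

variable {ι M R : Type*}

theorem sq_sub_le_mul_sum_range_sq_sub [CommRing R] [LinearOrder R] [IsStrictOrderedRing R]
    (f : ℕ → R) (n : ℕ) :
    (f 0 - f n) ^ 2 ≤ n * ∑ k ∈ range n, (f k - f (k + 1)) ^ 2 := by
  simpa only [sum_range_sub', card_range] using
    sq_sum_le_card_mul_sum_sq (s := range n) (f := fun k => f k - f (k + 1))

theorem sq_abs_sub_abs_le_sq_add [CommRing R] [LinearOrder R] [IsStrictOrderedRing R] (x y : R) :
    (|x| - |y|) ^ 2 ≤ (x + y) ^ 2 :=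
  sq_le_sq.2 (by simpa using abs_abs_sub_abs_le_abs_sub x (-y))

theorem sum_range_consecutive_add_swap_le [Fintype ι] [AddCommMonoid M]
    [PartialOrder M] [IsOrderedAddMonoid M] {F : ι → ι → M} (hF : ∀ i j, 0 ≤ F i j) {v : ℕ → ι}
    {n : ℕ} (hv : Set.InjOn v {k | k ≤ n}) :
    ∑ k ∈ range n, (F (v k) (v (k + 1)) + F (v (k + 1)) (v k)) ≤ ∑ i, ∑ j, F i j := by
  classical
  have hinj : ∀ {k l}, k ≤ n → l ≤ n → v k = v l → k = l := fun hk hl h => hv hk hl h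
  let forward : ℕ → ι × ι := fun k => (v k, v (k + 1))
  let backward : ℕ → ι × ι := fun k => (v (k + 1), v k)
  have hforward : Set.InjOn forward (range n) := fun k hk l hl h =>
    hinj (mem_range.1 hk).le (mem_range.1 hl).le (Prod.ext_iff.1 h).1
  have hbackward : Set.InjOn backward (range n) := fun k hk l hl h =>
    hinj (mem_range.1 hk).le (mem_range.1 hl).le (Prod.ext_iff.1 h).2
  have hdisjoint : Disjoint ((range n).image forward) ((range n).image backward) := by
    simp only [disjoint_left, mem_image, mem_range, not_exists, not_and]
    rintro _ ⟨k, hk, rfl⟩ l hl h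
    have hlk : l + 1 = k := hinj hl hk.le (Prod.ext_iff.1 h).1
    have hkl : l = k + 1 := hinj hl.le hk (Prod.ext_iff.1 h).2
    lia
  calc ∑ k ∈ range n, (F (v k) (v (k + 1)) + F (v (k + 1)) (v k))
      = ∑ p ∈ (range n).image forward ∪ (range n).image backward, F p.1 p.2 := by
        rw [sum_union hdisjoint, sum_image hforward, sum_image hbackward, sum_add_distrib]
    _ ≤ ∑ p : ι × ι, F p.1 p.2 := sum_le_univ_sum_of_nonneg fun p => hF p.1 p.2
    _ = ∑ i, ∑ j, F i j := Fintype.sum_prod_type' F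

theorem sSup_dist_eq_diam [Nonempty ι] {G : SimpleGraph ι} (hG : G.ediam ≠ ⊤) :
    sSup {x : ℝ | ∃ i j : ι, x = (G.dist i j : ℝ)} = G.diam := by
  refine IsGreatest.csSup_eq ⟨?_, ?_⟩
  · obtain ⟨i, j, hij⟩ := G.exists_dist_eq_diam
    exact ⟨i, j, by rw [hij]⟩
  · rintro _ ⟨i, j, rfl⟩
    exact_mod_cast SimpleGraph.dist_le_diam hG

/-- The simple graph underlying the weights `w`: its edges are the pairs of distinct vertices of
positive weight, so loops are discarded. Path lengths and the diameter are taken in it. -/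
def supportGraph (w : ι → ι → ℝ) : SimpleGraph ι :=
  SimpleGraph.fromRel fun i j => 0 < w i j

/-- The smallest positive weight `w_min`. The junk value `sInf ∅ = 0` occurs only if no weight is
positive. -/
def minWeight (w : ι → ι → ℝ) : ℝ :=
  sInf {x : ℝ | ∃ i j : ι, 0 < w i j ∧ x = w i j}

/-- The quadratic form `∑_{i,j} w_ij (u(i) + u(j))²` of the signless Laplacian, which measures how
far `λ` is from `2`. The sum runs over ordered pairs, so an edge joining distinct vertices is
counted twice. -/
def signlessEnergy [Fintype ι] (w : ι → ι → ℝ) (u : ι → ℝ) : ℝ :=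
  ∑ i, ∑ j, w i j * (u i + u j) ^ 2

variable {w : ι → ι → ℝ}

theorem pos_of_supportGraph_adj (hsym : ∀ i j, w i j = w j i) {i j : ι}
    (h : (supportGraph w).Adj i j) : 0 < w i j :=
  h.2.elim id fun hji => hsym i j ▸ hji

theorem Conn.preconnected_supportGraph (hconn : Conn w) : (supportGraph w).Preconnected := by
  intro i j
  induction hconn i j with
  | refl => exact SimpleGraph.Reachable.refl i
  | @tail k l _ hkl hreach =>
    rcases eq_or_ne k l with rfl | hne
    · exact hreach
    · exact hreach.trans (SimpleGraph.Adj.reachable ⟨hne, Or.inl hkl⟩)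

theorem minWeight_nonneg (w : ι → ι → ℝ) : 0 ≤ minWeight w :=
  Real.sInf_nonneg fun _ ⟨_, _, hpos, hx⟩ => hx ▸ hpos.le

theorem minWeight_le_of_pos {i j : ι} (h : 0 < w i j) : minWeight w ≤ w i j :=
  csInf_le ⟨0, fun _ ⟨_, _, hpos, hx⟩ => hx ▸ hpos.le⟩ ⟨i, j, h, rfl⟩

theorem minWeight_mul_sq_abs_sub_abs_le (hsym : ∀ i j, w i j = w j i) (u : ι → ℝ) {i j : ι}
    (h : (supportGraph w).Adj i j) :
    minWeight w * (|u i| - |u j|) ^ 2 ≤ w i j * (u i + u j) ^ 2 :=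
  have hpos := pos_of_supportGraph_adj hsym h
  mul_le_mul (minWeight_le_of_pos hpos) (sq_abs_sub_abs_le_sq_add _ _) (sq_nonneg _) hpos.le

variable [Fintype ι]

theorem signlessEnergy_nonneg (hnn : ∀ i j, 0 ≤ w i j) (u : ι → ℝ) : 0 ≤ signlessEnergy w u :=
  sum_nonneg fun i _ => sum_nonneg fun j _ => mul_nonneg (hnn i j) (sq_nonneg _)

theorem minWeight_mul_sum_path_le_signlessEnergy (hsym : ∀ i j, w i j = w j i)
    (hnn : ∀ i j, 0 ≤ w i j) (u : ι → ℝ) {a b : ι} {p : (supportGraph w).Walk a b}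
    (hp : p.IsPath) :
    2 * (minWeight w *
        ∑ k ∈ range p.length, (|u (p.getVert k)| - |u (p.getVert (k + 1))|) ^ 2) ≤
      signlessEnergy w u := by
  let F : ι → ι → ℝ := fun i j => w i j * (u i + u j) ^ 2
  have hF : ∀ i j, 0 ≤ F i j := fun i j => mul_nonneg (hnn i j) (sq_nonneg _)
  refine le_trans ?_ (sum_range_consecutive_add_swap_le hF hp.getVert_injOn)
  rw [← mul_assoc, mul_sum]
  refine sum_le_sum fun k hk => ?_
  have hadj := p.adj_getVert_succ (mem_range.1 hk)
  have hforward := minWeight_mul_sq_abs_sub_abs_le hsym u hadj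
  have hbackward := minWeight_mul_sq_abs_sub_abs_le hsym u hadj.symm
  linarith

theorem minWeight_mul_sq_abs_sub_abs_le_dist_mul_signlessEnergy
    (hsym : ∀ i j, w i j = w j i) (hnn : ∀ i j, 0 ≤ w i j) (u : ι → ℝ) {a b : ι}
    (hab : (supportGraph w).Reachable a b) :
    2 * (minWeight w * (|u a| - |u b|) ^ 2) ≤
      (supportGraph w).dist a b * signlessEnergy w u := by
  obtain ⟨p, hp, hlength⟩ := hab.exists_path_of_dist
  rw [← hlength]
  let S : ℝ := ∑ k ∈ range p.length, (|u (p.getVert k)| - |u (p.getVert (k + 1))|) ^ 2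
  have hcauchy : (|u a| - |u b|) ^ 2 ≤ p.length * S := by
    simpa only [p.getVert_zero, p.getVert_length] using
      sq_sub_le_mul_sum_range_sq_sub (fun k => |u (p.getVert k)|) p.length
  calc 2 * (minWeight w * (|u a| - |u b|) ^ 2)
      ≤ 2 * (minWeight w * (p.length * S)) := by
        have := minWeight_nonneg w
        gcongr
    _ = p.length * (2 * (minWeight w * S)) := by ring
    _ ≤ p.length * signlessEnergy w u := by
        gcongr
        exact minWeight_mul_sum_path_le_signlessEnergy hsym hnn u hp

theorem deg_mul_lap {i : ι} (hi : deg w i ≠ 0) (u : ι → ℝ) :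
    deg w i * lap w u i = deg w i * u i - ∑ j, w i j * u j := by
  rw [lap, mul_sub, ← mul_assoc, mul_one_div_cancel hi, one_mul]

theorem signlessEnergy_eq_sum_lap (hsym : ∀ i j, w i j = w j i) (hdeg : ∀ i, deg w i ≠ 0)
    (u : ι → ℝ) :
    signlessEnergy w u = 2 * ∑ i, deg w i * u i * (2 * u i - lap w u i) := by
  have hleft : ∑ i, ∑ j, w i j * u i ^ 2 = ∑ i, deg w i * u i ^ 2 := by
    simp only [deg, sum_mul]
  have hright : ∑ i, ∑ j, w i j * u j ^ 2 = ∑ i, deg w i * u i ^ 2 := by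
    rw [sum_comm, ← hleft]
    simp only [hsym]
  have hcross : ∑ i, ∑ j, w i j * (u i * u j) = ∑ i, deg w i * u i * (u i - lap w u i) := by
    refine sum_congr rfl fun i _ => ?_
    calc ∑ j, w i j * (u i * u j) = u i * ∑ j, w i j * u j := by
          rw [mul_sum]
          exact sum_congr rfl fun j _ => mul_left_comm _ _ _
      _ = deg w i * u i * (u i - lap w u i) := by linear_combination u i * deg_mul_lap (hdeg i) u
  calc signlessEnergy w u
      = ∑ i, ∑ j, w i j * u i ^ 2 + ∑ i, ∑ j, w i j * u j ^ 2
          + 2 * ∑ i, ∑ j, w i j * (u i * u j) := by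
        simp only [signlessEnergy, mul_sum, ← sum_add_distrib]
        exact sum_congr rfl fun i _ => sum_congr rfl fun j _ => by ring
    _ = 2 * ∑ i, deg w i * u i * (2 * u i - lap w u i) := by
        rw [hleft, hright, hcross]
        simp only [mul_sum, ← sum_add_distrib]
        exact sum_congr rfl fun i _ => by ring

theorem signlessEnergy_of_lap_eq (hsym : ∀ i j, w i j = w j i) (hdeg : ∀ i, deg w i ≠ 0)
    {lam : ℝ} {u : ι → ℝ} (heig : ∀ i, lap w u i = lam * u i) :
    signlessEnergy w u = 2 * ((2 - lam) * ∑ i, deg w i * u i ^ 2) := by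
  rw [signlessEnergy_eq_sum_lap hsym hdeg, mul_sum (a := 2 - lam)]
  congr 1
  exact sum_congr rfl fun i _ => by rw [heig]; ring

theorem sum_deg_mul_sq_pos (hdeg : ∀ i, 0 < deg w i) {u : ι → ℝ} (hu : u ≠ 0) :
    0 < ∑ i, deg w i * u i ^ 2 := by
  obtain ⟨i, hi⟩ := Function.ne_iff.1 hu
  exact sum_pos' (fun j _ => mul_nonneg (hdeg j).le (sq_nonneg _))
    ⟨i, mem_univ i, mul_pos (hdeg i) (sq_pos_iff.2 hi)⟩

theorem sum_deg_mul_sq_le_vol (hdeg : ∀ i, 0 ≤ deg w i) {u : ι → ℝ} (hu : ∀ i, |u i| ≤ 1) :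
    ∑ i, deg w i * u i ^ 2 ≤ vol w univ :=
  sum_le_sum fun i _ => mul_le_of_le_one_right (hdeg i) ((sq_le_one_iff_abs_le_one _).2 (hu i))

theorem le_two_of_lap_eq (hsym : ∀ i j, w i j = w j i) (hnn : ∀ i j, 0 ≤ w i j)
    (hdeg : ∀ i, 0 < deg w i) {lam : ℝ} {u : ι → ℝ} (hu : u ≠ 0)
    (heig : ∀ i, lap w u i = lam * u i) : lam ≤ 2 := by
  have henergy := signlessEnergy_nonneg hnn u
  rw [signlessEnergy_of_lap_eq hsym (fun i => (hdeg i).ne') heig] at henergy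
  have hgap : 0 ≤ 2 - lam :=
    nonneg_of_mul_nonneg_left (by linarith) (sum_deg_mul_sq_pos hdeg hu)
  linarith

theorem minWeight_mul_sq_abs_sub_abs_le_of_lap_eq (hsym : ∀ i j, w i j = w j i)
    (hnn : ∀ i j, 0 ≤ w i j) (hdeg : ∀ i, 0 < deg w i) (hconn : (supportGraph w).Connected)
    {lam : ℝ} {u : ι → ℝ} (hu : u ≠ 0) (heig : ∀ i, lap w u i = lam * u i)
    (hone : ∀ i, |u i| ≤ 1) (a b : ι) :
    minWeight w * (|u a| - |u b|) ^ 2 ≤ (2 - lam) * ((supportGraph w).diam * vol w univ) := by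
  have := hconn.nonempty
  have hdist : (supportGraph w).dist a b ≤ (supportGraph w).diam :=
    SimpleGraph.dist_le_diam (SimpleGraph.connected_iff_ediam_ne_top.1 hconn)
  have hgap : 0 ≤ 2 - lam := sub_nonneg.2 (le_two_of_lap_eq hsym hnn hdeg hu heig)
  have hvol : ∑ i, deg w i * u i ^ 2 ≤ vol w univ :=
    sum_deg_mul_sq_le_vol (fun i => (hdeg i).le) hone
  have hpath := minWeight_mul_sq_abs_sub_abs_le_dist_mul_signlessEnergy hsym hnn u
    (hconn.preconnected a b)
  rw [signlessEnergy_of_lap_eq hsym (fun i => (hdeg i).ne') heig] at hpath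
  calc minWeight w * (|u a| - |u b|) ^ 2
      ≤ (supportGraph w).dist a b * ((2 - lam) * ∑ i, deg w i * u i ^ 2) := by linarith
    _ ≤ (supportGraph w).diam * ((2 - lam) * vol w univ) := by
        have := (sum_deg_mul_sq_pos hdeg hu).le
        gcongr
    _ = (2 - lam) * ((supportGraph w).diam * vol w univ) := by ring

theorem largest_eigenvalue_le_of_normalized_eigenfunction_general
    [Nonempty ι] (w : ι → ι → ℝ)
    (hsym : ∀ i j, w i j = w j i) (hnn : ∀ i j, 0 ≤ w i j)
    (hdeg : ∀ i, 0 < deg w i) (hconn : Conn w) (hN : 2 ≤ Fintype.card ι)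
    (lam : ℝ) (u : ι → ℝ) (heig : ∀ i, lap w u i = lam * u i)
    (hnorm : univ.sup' univ_nonempty (fun i => |u i|) = 1)
    (wmin D : ℝ)
    (hwmin : wmin = sInf {x : ℝ | ∃ i j : ι, 0 < w i j ∧ x = w i j})
    (hD : D = sSup {x : ℝ | ∃ i j : ι,
        x = (((SimpleGraph.fromRel fun a b => 0 < w a b).dist i j : ℕ) : ℝ)}) :
    lam ≤ 2 - wmin * (1 - univ.inf' univ_nonempty (fun i => |u i|)) ^ 2 / (D * vol w univ) ∧
      ((∃ i, u i = 0) → lam ≤ 2 - wmin / (D * vol w univ)) := by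
  have := Fintype.one_lt_card_iff_nontrivial.1 hN
  have hG : (supportGraph w).Connected := ⟨hconn.preconnected_supportGraph⟩
  replace hD : D = (supportGraph w).diam :=
    hD.trans (sSup_dist_eq_diam (SimpleGraph.connected_iff_ediam_ne_top.1 hG))
  have hDvol : 0 < D * vol w univ := by
    rw [hD]
    exact mul_pos (Nat.cast_pos.2 (SimpleGraph.connected_iff_diam_ne_zero.1 hG).pos)
      (sum_pos (fun i _ => hdeg i) univ_nonempty)
  have hone : ∀ i, |u i| ≤ 1 := fun i => hnorm ▸ le_sup' (fun i => |u i|) (mem_univ i)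
  obtain ⟨a, -, ha⟩ := exists_mem_eq_sup' (univ_nonempty (α := ι)) (fun i => |u i|)
  rw [hnorm] at ha
  have hu : u ≠ 0 := by
    rintro rfl
    simp at ha
  have hbound : ∀ b, lam ≤ 2 - wmin * (1 - |u b|) ^ 2 / (D * vol w univ) := fun b => by
    rw [le_sub_comm, div_le_iff₀ hDvol, hwmin, hD, ha]
    exact minWeight_mul_sq_abs_sub_abs_le_of_lap_eq hsym hnn hdeg hG hu heig hone a b
  refine ⟨?_, fun ⟨b, hb⟩ => by simpa [hb] using hbound b⟩
  obtain ⟨b, -, hb⟩ := exists_mem_eq_inf' (univ_nonempty (α := ι)) (fun i => |u i|)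
  exact hb ▸ hbound b

end

/-- Proposition 56.
If `u` is an eigenfunction for the largest eigenvalue, normalized by `max_i |u(i)| = 1`,
then `λ_{N-1} ≤ 2 - w_min (1 - min_i |u(i)|)² / (D · vol(V))`, where `w_min` is the smallest
positive edge weight and `D` is the diameter; in particular if `u` vanishes somewhere, then
`λ_{N-1} ≤ 2 - w_min / (D · vol(V))`. -/
theorem largest_eigenvalue_le_of_normalized_eigenfunction
    [Nonempty V] (w : V → V → ℝ)
    (hsym : ∀ i j, w i j = w j i) (hnn : ∀ i j, 0 ≤ w i j)
    (hdeg : ∀ i, 0 < deg w i) (hconn : Conn w) (hN : 2 ≤ Fintype.card V)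
    (lam : ℝ) (u : V → ℝ) (hu : u ≠ 0) (heig : ∀ i, lap w u i = lam * u i)
    (hmax : ∀ μ, IsEigen w μ → μ ≤ lam)
    (hnorm : Finset.univ.sup' Finset.univ_nonempty (fun i => |u i|) = 1)
    (wmin D : ℝ)
    (hwmin : wmin = sInf { x : ℝ | ∃ i j : V, 0 < w i j ∧ x = w i j })
    (hD : D = sSup { x : ℝ | ∃ i j : V,
        x = (((SimpleGraph.fromRel fun a b => 0 < w a b).dist i j : ℕ) : ℝ) }) :
    lam ≤ 2 - wmin * (1 - Finset.univ.inf' Finset.univ_nonempty (fun i => |u i|)) ^ 2 /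
        (D * vol w Finset.univ) ∧
      ((∃ i, u i = 0) → lam ≤ 2 - wmin / (D * vol w Finset.univ)) :=
  largest_eigenvalue_le_of_normalized_eigenfunction_general
    w hsym hnn hdeg hconn hN lam u heig hnorm wmin D hwmin hD

end BJ
end
end

section
/- Let Γ be an unweighted graph with N vertices. Then (N−1)/(N+1) ≤ 𝓡 ≤ 1, and equality holds on the left hand side if and only if Γ is a regular graph and N is odd. -/
open Finset

noncomputable section

namespace BJ

variable {V : Type*} [Fintype V] [DecidableEq V]

/-!
Assign the numbers `d i` to two sides in decreasing order, always to the lighter side. If `k` is the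
last index whose assignment changed which side is heavier, then right after `k` the imbalance is at
most `d k`, and every later number is subtracted from it, so the final imbalance `x` satisfies
`x + ∑_{d i < d k} d i ≤ d k`. When no number exceeds `N + 1` times another, each `i` contributes at
least `d k` to `∑ d i + N ∑_{d i < d k} d i`, and hence `N x ≤ ∑ d i`. The volumes of the two sides
thus have ratio at least `(N - 1) / (N + 1)`.
-/

section Partition

theorem exists_subset_sum_sub_sum_sdiff_add_sum_lt_le {ι M : Type*} [DecidableEq ι]
    [AddCommGroup M] [LinearOrder M] [IsOrderedAddMonoid M] {d : ι → M} {s : Finset ι}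
    (hs : s.Nonempty) (hd : ∀ i ∈ s, 0 ≤ d i) :
    ∃ U ⊆ s, ∃ k ∈ s, 0 ≤ ∑ i ∈ U, d i - ∑ i ∈ s \ U, d i ∧
      ∑ i ∈ U, d i - ∑ i ∈ s \ U, d i + ∑ i ∈ s with d i < d k, d i ≤ d k := by
  induction s using Finset.induction_on_min_value d with
  | empty => exact absurd hs not_nonempty_empty
  | insert a s ha hmin ih =>
    have hda : 0 ≤ d a := hd a (mem_insert_self a s)
    rcases s.eq_empty_or_nonempty with rfl | hs
    · exact ⟨{a}, by simp, a, by simp, by simpa using hda, by simp [filter_singleton]⟩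
    obtain ⟨U, hU, k, hk, hnonneg, hle⟩ := ih hs fun i hi => hd i (mem_insert_of_mem hi)
    have haU : a ∉ U := fun h => ha (hU h)
    by_cases hflip : ∑ i ∈ U, d i - ∑ i ∈ s \ U, d i < d a
    · refine ⟨insert a (s \ U), insert_subset_insert a sdiff_subset, a, mem_insert_self a s, ?_⟩
      have hcompl : insert a s \ insert a (s \ U) = U := by grind
      have hsmaller : {i ∈ insert a s | d i < d a} = ∅ := by grind
      rw [hcompl, hsmaller, sum_insert (by simp [ha]), sum_empty]
      constructor <;> grind
    · refine ⟨U, hU.trans (subset_insert a s), k, mem_insert_of_mem hk, ?_⟩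
      have hsmaller : ∑ i ∈ insert a s with d i < d k, d i ≤ d a + ∑ i ∈ s with d i < d k, d i := by
        rw [filter_insert]
        split_ifs
        · rw [sum_insert (by simp [ha])]
        · grind
      rw [insert_sdiff_of_notMem s haU, sum_insert (by simp [ha])]
      constructor <;> grind

variable {ι K : Type*} [CommRing K] [LinearOrder K]

theorem sum_add_ite_mul (s : Finset ι) (d : ι → K) (b c : K) :
    ∑ i ∈ s, (d i + if d i < b then c * d i else 0) =
      ∑ i ∈ s, d i + c * ∑ i ∈ s with d i < b, d i := by
  rw [sum_add_distrib, ← sum_filter, mul_sum]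

variable [IsStrictOrderedRing K]

theorem le_add_ite_mul {a b c : K} (h : b ≤ (c + 1) * a) : b ≤ a + if a < b then c * a else 0 := by
  split_ifs <;> linarith

theorem lt_add_ite_mul {a b c : K} (h : b < (c + 1) * a) (hne : a ≠ b) :
    b < a + if a < b then c * a else 0 := by
  split_ifs with hab
  · linarith
  · rw [add_zero]
    exact lt_of_le_of_ne (not_lt.mp hab) hne.symm

theorem card_mul_le_sum_add_mul_sum_lt {s : Finset ι} {d : ι → K} {b c : K}
    (h : ∀ i ∈ s, b ≤ (c + 1) * d i) :
    #s * b ≤ ∑ i ∈ s, d i + c * ∑ i ∈ s with d i < b, d i := by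
  rw [← sum_add_ite_mul, ← nsmul_eq_mul]
  exact card_nsmul_le_sum s _ b fun i hi => le_add_ite_mul (h i hi)

theorem card_mul_lt_sum_add_mul_sum_lt {s : Finset ι} {d : ι → K} {b c : K}
    (h : ∀ i ∈ s, b < (c + 1) * d i) (hne : ∃ i ∈ s, d i ≠ b) :
    #s * b < ∑ i ∈ s, d i + c * ∑ i ∈ s with d i < b, d i := by
  obtain ⟨i, hi, hib⟩ := hne
  rw [← sum_add_ite_mul, ← nsmul_eq_mul, ← sum_const]
  exact sum_lt_sum (fun j hj => le_add_ite_mul (h j hj).le) ⟨i, hi, lt_add_ite_mul (h i hi) hib⟩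

theorem pos_of_lt_natCast_add_one_mul {a : K} {n : ℕ} (h : a < (n + 1) * a) : 0 < a :=
  pos_of_mul_pos_right (by linarith : 0 < n * a) n.cast_nonneg

theorem exists_subset_card_mul_abs_sum_sub_sum_sdiff_le [DecidableEq ι] {s : Finset ι} {d : ι → K}
    (hs : s.Nonempty) (h : ∀ i ∈ s, ∀ j ∈ s, d i < (#s + 1) * d j) :
    ∃ U ⊆ s, #s * |∑ i ∈ U, d i - ∑ i ∈ s \ U, d i| ≤ ∑ i ∈ s, d i ∧
      (#s * |∑ i ∈ U, d i - ∑ i ∈ s \ U, d i| = ∑ i ∈ s, d i → ∃ b, ∀ i ∈ s, d i = b) := by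
  obtain ⟨U, hU, k, hk, hnonneg, hle⟩ := exists_subset_sum_sub_sum_sdiff_add_sum_lt_le hs
    fun i hi => (pos_of_lt_natCast_add_one_mul (h i hi i hi)).le
  have hmul := mul_le_mul_of_nonneg_left hle (#s).cast_nonneg (α := K)
  rw [mul_add] at hmul
  refine ⟨U, hU, ?_⟩
  rw [abs_of_nonneg hnonneg]
  constructor
  · linarith [card_mul_le_sum_add_mul_sum_lt fun i hi => (h k hk i hi).le]
  · intro heq
    refine ⟨d k, ?_⟩
    by_contra! hne
    linarith [card_mul_lt_sum_add_mul_sum_lt (h k hk) hne]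

end Partition

section Ratio

variable {K : Type*} [Field K] [LinearOrder K] [IsStrictOrderedRing K] {a b c : K}

theorem sub_one_div_add_one_le_min_div_max_iff (hc : 0 < c + 1) (hmax : 0 < max a b) :
    (c - 1) / (c + 1) ≤ min a b / max a b ↔ c * |a - b| ≤ a + b := by
  rw [div_le_div_iff₀ hc hmax, ← max_sub_min_eq_abs', ← min_add_max a b]
  constructor <;> intro h <;> linarith

theorem min_div_max_le_sub_one_div_add_one_iff (hc : 0 < c + 1) (hmax : 0 < max a b) :
    min a b / max a b ≤ (c - 1) / (c + 1) ↔ a + b ≤ c * |a - b| := by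
  rw [div_le_div_iff₀ hmax hc, ← max_sub_min_eq_abs', ← min_add_max a b]
  constructor <;> intro h <;> linarith

end Ratio

section Balance

/-- The balance `𝓡(U) = min(vol U, vol Uᶜ) / max(vol U, vol Uᶜ)` of the cut `(U, Uᶜ)`. It is `0`
if the larger volume vanishes. -/
def volBalance (w : V → V → ℝ) (U : Finset V) : ℝ :=
  min (vol w U) (vol w Uᶜ) / max (vol w U) (vol w Uᶜ)

/-- The constant `𝓡`, the largest balance of a cut into two nonempty sides. It is encoded as a
supremum of reals, with junk value `0` if there is no such cut. -/
def maxBalance (w : V → V → ℝ) : ℝ :=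
  sSup {r : ℝ | ∃ U : Finset V, U.Nonempty ∧ U ≠ Finset.univ ∧ r = volBalance w U}

variable {w : V → V → ℝ} {U : Finset V} {c d : ℝ}

theorem maxBalance_le_iff [Nontrivial V] :
    maxBalance w ≤ c ↔ ∀ U : Finset V, U.Nonempty → U ≠ univ → volBalance w U ≤ c := by
  have hfinite : {r | ∃ U : Finset V, U.Nonempty ∧ U ≠ univ ∧ r = volBalance w U}.Finite :=
    (Set.finite_range (volBalance w)).subset fun r ⟨U, _, _, hr⟩ => ⟨U, hr.symm⟩
  rw [maxBalance, csSup_le_iff hfinite.bddAbove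
    ⟨_, {Classical.arbitrary V}, singleton_nonempty _, singleton_ne_univ _, rfl⟩]
  exact ⟨fun h U hU hU' => h _ ⟨U, hU, hU', rfl⟩, fun h r ⟨U, hU, hU', hr⟩ => hr ▸ h U hU hU'⟩

theorem volBalance_le_maxBalance (hU : U.Nonempty) (hU' : U ≠ univ) :
    volBalance w U ≤ maxBalance w := by
  obtain ⟨i, hi⟩ := hU
  obtain ⟨j, hj⟩ : ∃ j, j ∉ U := by simpa [eq_univ_iff_forall] using hU'
  have : Nontrivial V := ⟨i, j, ne_of_mem_of_not_mem hi hj⟩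
  exact maxBalance_le_iff.mp le_rfl U ⟨i, hi⟩ hU'

theorem vol_nonneg {V : Type*} [Fintype V] {w : V → V → ℝ} (hdeg : ∀ i, 0 ≤ deg w i)
    (U : Finset V) : 0 ≤ vol w U :=
  sum_nonneg fun i _ => hdeg i

theorem volBalance_le_one (hdeg : ∀ i, 0 ≤ deg w i) : volBalance w U ≤ 1 :=
  div_le_one_of_le₀ min_le_max (le_max_of_le_left (vol_nonneg hdeg U))

theorem vol_add_vol_compl (w : V → V → ℝ) (U : Finset V) : vol w U + vol w Uᶜ = vol w univ :=
  sum_add_sum_compl U (deg w)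

theorem volBalance_empty (w : V → V → ℝ) : volBalance w ∅ = 0 := by
  rw [volBalance, show vol w ∅ = 0 from sum_empty]
  simp [le_total]

theorem volBalance_univ (w : V → V → ℝ) : volBalance w univ = 0 := by
  rw [← volBalance_empty w, volBalance, volBalance, compl_univ, compl_empty, min_comm, max_comm]

theorem max_vol_pos [Nonempty V] (hdeg : ∀ i, 0 < deg w i) : 0 < max (vol w U) (vol w Uᶜ) := by
  have htotal : 0 < vol w univ := sum_pos (fun i _ => hdeg i) univ_nonempty
  by_contra! hmax
  linarith [vol_add_vol_compl w U, le_max_left (vol w U) (vol w Uᶜ),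
    le_max_right (vol w U) (vol w Uᶜ)]

theorem sub_one_div_add_one_le_volBalance_iff [Nonempty V] (hdeg : ∀ i, 0 < deg w i)
    (hc : 0 < c + 1) :
    (c - 1) / (c + 1) ≤ volBalance w U ↔ c * |vol w U - vol w Uᶜ| ≤ vol w univ := by
  rw [volBalance, sub_one_div_add_one_le_min_div_max_iff hc (max_vol_pos hdeg), vol_add_vol_compl]

theorem volBalance_le_sub_one_div_add_one_iff [Nonempty V] (hdeg : ∀ i, 0 < deg w i)
    (hc : 0 < c + 1) :
    volBalance w U ≤ (c - 1) / (c + 1) ↔ vol w univ ≤ c * |vol w U - vol w Uᶜ| := by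
  rw [volBalance, min_div_max_le_sub_one_div_add_one_iff hc (max_vol_pos hdeg), vol_add_vol_compl]

theorem exists_sub_one_div_add_one_le_volBalance [Nontrivial V]
    (h : ∀ i j, deg w i < (Fintype.card V + 1) * deg w j) :
    ∃ U : Finset V, U.Nonempty ∧ U ≠ univ ∧
      ((Fintype.card V : ℝ) - 1) / (Fintype.card V + 1) ≤ volBalance w U ∧
      (volBalance w U ≤ ((Fintype.card V : ℝ) - 1) / (Fintype.card V + 1) →
        ∃ d, ∀ i, deg w i = d) := by
  have hdeg i : 0 < deg w i := pos_of_lt_natCast_add_one_mul (h i i)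
  have hcard : (1 : ℝ) < Fintype.card V := mod_cast Fintype.one_lt_card
  have hc : (0 : ℝ) < Fintype.card V + 1 := by positivity
  obtain ⟨U, -, hle, heq⟩ := exists_subset_card_mul_abs_sum_sub_sum_sdiff_le
    (univ_nonempty (α := V)) fun i _ j _ => h i j
  simp only [← compl_eq_univ_sdiff, card_univ, mem_univ, true_imp_iff] at hle heq
  change Fintype.card V * |vol w U - vol w Uᶜ| ≤ vol w univ at hle
  have hbalance := (sub_one_div_add_one_le_volBalance_iff hdeg hc).mpr hle
  have hbalance_pos : 0 < volBalance w U := (div_pos (by linarith) hc).trans_le hbalance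
  refine ⟨U, nonempty_iff_ne_empty.mpr ?_, ?_, hbalance, fun hge => heq (hle.antisymm
    ((volBalance_le_sub_one_div_add_one_iff hdeg hc).mp hge))⟩
  · rintro rfl
    exact hbalance_pos.ne' (volBalance_empty w)
  · rintro rfl
    exact hbalance_pos.ne' (volBalance_univ w)

theorem vol_eq_card_mul {V : Type*} [Fintype V] {w : V → V → ℝ} {d : ℝ} (hd : ∀ i, deg w i = d)
    (U : Finset V) : vol w U = #U * d := by
  simp only [vol, hd, sum_const, nsmul_eq_mul]

theorem exists_volBalance_eq_one_of_even_card [Nonempty V] (hd : ∀ i, deg w i = d) (hd0 : 0 < d)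
    (heven : Even (Fintype.card V)) :
    ∃ U : Finset V, U.Nonempty ∧ U ≠ univ ∧ volBalance w U = 1 := by
  obtain ⟨m, hm⟩ := heven
  have hm0 : 0 < m := by have := Fintype.card_pos (α := V); omega
  obtain ⟨U, -, hU⟩ := exists_subset_card_eq (s := (univ : Finset V)) (n := m)
    (by rw [card_univ]; omega)
  have hUc : #Uᶜ = m := by rw [card_compl]; omega
  refine ⟨U, card_pos.mp (by omega), fun h => ?_, ?_⟩
  · rw [h, card_univ] at hU
    omega
  · rw [volBalance, vol_eq_card_mul hd, vol_eq_card_mul hd, hU, hUc, min_self, max_self]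
    exact div_self (by positivity)

theorem one_le_abs_card_sub_card_compl_of_odd_card (hodd : Odd (Fintype.card V)) (U : Finset V) :
    (1 : ℝ) ≤ |(#U : ℝ) - #Uᶜ| := by
  have hne : (#U : ℤ) - #Uᶜ ≠ 0 := by
    have := card_add_card_compl U
    grind
  exact_mod_cast Int.one_le_abs hne

theorem volBalance_le_of_odd_card (hd : ∀ i, deg w i = d) (hd0 : 0 < d)
    (hodd : Odd (Fintype.card V)) (U : Finset V) :
    volBalance w U ≤ ((Fintype.card V : ℝ) - 1) / (Fintype.card V + 1) := by
  have : Nonempty V := Fintype.card_pos_iff.mp hodd.pos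
  rw [volBalance_le_sub_one_div_add_one_iff (fun i => hd i ▸ hd0) (by positivity)]
  calc vol w univ = Fintype.card V * d := by rw [vol_eq_card_mul hd, card_univ]
    _ ≤ Fintype.card V * (|(#U : ℝ) - #Uᶜ| * d) := by
      gcongr
      exact le_mul_of_one_le_left hd0.le (one_le_abs_card_sub_card_compl_of_odd_card hodd U)
    _ = Fintype.card V * |vol w U - vol w Uᶜ| := by
      rw [vol_eq_card_mul hd, vol_eq_card_mul hd, ← sub_mul, abs_mul, abs_of_pos hd0]

end Balance

section Unweighted

variable {V : Type*} [Fintype V] {w : V → V → ℝ}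

theorem deg_le_card (hw : ∀ i j, w i j ≤ 1) (i : V) : deg w i ≤ Fintype.card V := by
  simpa [deg] using sum_le_card_nsmul univ (w i) 1 fun j _ => hw i j

theorem one_le_deg [Nontrivial V] (h01 : ∀ i j, w i j = 0 ∨ w i j = 1) (hconn : Conn w) (i : V) :
    1 ≤ deg w i := by
  obtain ⟨j, hj⟩ := exists_ne i
  obtain hij | ⟨k, hk, -⟩ := (hconn i j).cases_head
  · exact absurd hij.symm hj
  have hnonneg : ∀ l, 0 ≤ w i l := fun l => by rcases h01 i l with h | h <;> simp [h]
  calc 1 = w i k := ((h01 i k).resolve_left hk.ne').symm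
    _ ≤ deg w i := single_le_sum (fun l _ => hnonneg l) (mem_univ k)

theorem deg_lt_card_add_one_mul_deg [Nontrivial V] (h01 : ∀ i j, w i j = 0 ∨ w i j = 1)
    (hconn : Conn w) (i j : V) : deg w i < (Fintype.card V + 1) * deg w j :=
  calc deg w i ≤ Fintype.card V :=
      deg_le_card (fun k l => by rcases h01 k l with h | h <;> simp [h]) i
    _ < Fintype.card V + 1 := lt_add_one _
    _ ≤ (Fintype.card V + 1) * deg w j :=
      le_mul_of_one_le_right (by positivity) (one_le_deg h01 hconn j)

end Unweighted

-- The factor `N + 1` is the ratio at which unequal degrees first reach the left bound: the degrees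
-- `1, …, 1, N + 1` have `𝓡 = (N - 1) / (N + 1)`.
theorem volume_balance_bounds_unweighted_general [Nontrivial V] (w : V → V → ℝ)
    (hdeg : ∀ i j, deg w i < (Fintype.card V + 1) * deg w j) :
    (((Fintype.card V : ℝ) - 1) / ((Fintype.card V : ℝ) + 1) ≤ maxBalance w ∧ maxBalance w ≤ 1) ∧
      (((Fintype.card V : ℝ) - 1) / ((Fintype.card V : ℝ) + 1) = maxBalance w ↔
        ((∃ d : ℝ, ∀ i, deg w i = d) ∧ Odd (Fintype.card V))) := by
  have hpos i : 0 < deg w i := pos_of_lt_natCast_add_one_mul (hdeg i i)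
  have hd_pos {d : ℝ} (hd : ∀ i, deg w i = d) : 0 < d := hd (Classical.arbitrary V) ▸ hpos _
  obtain ⟨U, hU, hU', hlower, hregular⟩ := exists_sub_one_div_add_one_le_volBalance hdeg
  have hUmax : volBalance w U ≤ maxBalance w := volBalance_le_maxBalance hU hU'
  refine ⟨⟨hlower.trans hUmax, maxBalance_le_iff.mpr fun A _ _ => volBalance_le_one
    fun i => (hpos i).le⟩, fun heq => ?_, fun ⟨⟨d, hd⟩, hodd⟩ => ?_⟩
  · obtain ⟨d, hd⟩ := hregular (hUmax.trans_eq heq.symm)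
    refine ⟨⟨d, hd⟩, Nat.not_even_iff_odd.mp fun heven => ?_⟩
    obtain ⟨A, hA, hA', hAone⟩ := exists_volBalance_eq_one_of_even_card hd (hd_pos hd) heven
    have hmax : 1 ≤ maxBalance w := hAone ▸ volBalance_le_maxBalance hA hA'
    rw [← heq, le_div_iff₀ (by positivity)] at hmax
    linarith
  · exact (hlower.trans hUmax).antisymm
      (maxBalance_le_iff.mpr fun A _ _ => volBalance_le_of_odd_card hd (hd_pos hd) hodd A)

/-- Lemma 16.
For an unweighted graph with `N` vertices, `(N-1)/(N+1) ≤ 𝓡 ≤ 1`, with equality on the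
left iff the graph is regular and `N` is odd. Here
`𝓡 = max_{∅ ≠ U ⊊ V} min(vol U, vol Uᶜ)/max(vol U, vol Uᶜ)`. -/
theorem volume_balance_bounds_unweighted
    (w : V → V → ℝ)
    (hsym : ∀ i j, w i j = w j i) (h01 : ∀ i j, w i j = 0 ∨ w i j = 1)
    (hloop : ∀ i, w i i = 0) (hconn : Conn w) (hN : 2 ≤ Fintype.card V)
    (R : ℝ)
    (hR : R = sSup { r : ℝ | ∃ U : Finset V, U.Nonempty ∧ U ≠ Finset.univ ∧
        r = min (vol w U) (vol w Uᶜ) / max (vol w U) (vol w Uᶜ) }) :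
    (((Fintype.card V : ℝ) - 1) / ((Fintype.card V : ℝ) + 1) ≤ R ∧ R ≤ 1) ∧
      (((Fintype.card V : ℝ) - 1) / ((Fintype.card V : ℝ) + 1) = R ↔
        ((∃ d : ℝ, ∀ i, deg w i = d) ∧ Odd (Fintype.card V))) := by
  have : Nontrivial V := Fintype.one_lt_card_iff_nontrivial.mp hN
  exact hR ▸ volume_balance_bounds_unweighted_general w (deg_lt_card_add_one_mul_deg h01 hconn)

end BJ
end
end
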